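/- In the algebra Aff²(S_ℓ), the generators x_m and y_p commute: x_m y_p = y_p x_m for all m, p ∈ [1,ℓ]. -/

import Mathlib

/-! Conjugation by the involution `σ_k` swaps the indices `k` and `k + 1` of both the `x`'s and
the `y`'s and fixes every other index, so a commutation `x_m y_p = y_p x_m` may be transported
along simultaneous transpositions of `m` and `p`. As `x_1` commutes with `y_2` and with every
`σ_k`, `k ≥ 2`, it commutes with all `y_p`, `p ≥ 2` (`comm_x_zero_y_pos`). It also commutes with
the product `y_1 ⋯ y_ℓ`, whose factors after the first form a unit commuting with `x_1`; cancelling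
that unit gives `x_1 y_1 = y_1 x_1` (`comm_x_zero_y`). Conjugating by `σ_1, σ_2, …` then moves
`x_1` to any `x_m`, while only permuting the `y_p` (`comm_x_y`).
Indices here start at 1; in the code they start at 0. -/

noncomputable section

/-- Generators of the algebra `Aff²(S_ℓ)`: `σ_k^{±1}` (the generator `sigma a` corresponds
to `σ_{a+1}`, `a ∈ Fin (ℓ-1)`), and `x_r^{±1}, y_r^{±1}` (`x r` corresponds to `x_{r+1}`,
`r ∈ Fin ℓ`). -/
inductive Aff2Gen (ℓ : ℕ) : Type
  | sigma (k : Fin (ℓ-1))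
  | sigmaInv (k : Fin (ℓ-1))
  | x (r : Fin ℓ)
  | xInv (r : Fin ℓ)
  | y (r : Fin ℓ)
  | yInv (r : Fin ℓ)

variable (ℓ : ℕ)

/-- Generators viewed in the free algebra. -/
def sg (k : Fin (ℓ-1)) : FreeAlgebra ℂ (Aff2Gen ℓ) := FreeAlgebra.ι ℂ (Aff2Gen.sigma k)
def sgInv (k : Fin (ℓ-1)) : FreeAlgebra ℂ (Aff2Gen ℓ) := FreeAlgebra.ι ℂ (Aff2Gen.sigmaInv k)
def xg (r : Fin ℓ) : FreeAlgebra ℂ (Aff2Gen ℓ) := FreeAlgebra.ι ℂ (Aff2Gen.x r)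
def xgInv (r : Fin ℓ) : FreeAlgebra ℂ (Aff2Gen ℓ) := FreeAlgebra.ι ℂ (Aff2Gen.xInv r)
def yg (r : Fin ℓ) : FreeAlgebra ℂ (Aff2Gen ℓ) := FreeAlgebra.ι ℂ (Aff2Gen.y r)
def ygInv (r : Fin ℓ) : FreeAlgebra ℂ (Aff2Gen ℓ) := FreeAlgebra.ι ℂ (Aff2Gen.yInv r)

/-- The smaller of the two (0-indexed) positions interchanged by `σ_{k+1}`. -/
def pos0 (k : Fin (ℓ-1)) : Fin ℓ := ⟨k.val, by omega⟩
/-- The larger of the two (0-indexed) positions interchanged by `σ_{k+1}`. -/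
def pos1 (k : Fin (ℓ-1)) : Fin ℓ := ⟨k.val + 1, by have := k.isLt; omega⟩

/-- The defining relations of `Aff²(S_ℓ)`. -/
inductive Aff2Rel : FreeAlgebra ℂ (Aff2Gen ℓ) → FreeAlgebra ℂ (Aff2Gen ℓ) → Prop
  | sigma_right_inv (k : Fin (ℓ-1)) : Aff2Rel (sg ℓ k * sgInv ℓ k) 1
  | sigma_left_inv (k : Fin (ℓ-1)) : Aff2Rel (sgInv ℓ k * sg ℓ k) 1
  | braid (k j : Fin (ℓ-1)) (h : (j : ℕ) = (k : ℕ) + 1) :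
      Aff2Rel (sg ℓ k * sg ℓ j * sg ℓ k) (sg ℓ j * sg ℓ k * sg ℓ j)
  | sigma_comm (k j : Fin (ℓ-1)) (h : (k : ℕ) + 1 < (j : ℕ) ∨ (j : ℕ) + 1 < (k : ℕ)) :
      Aff2Rel (sg ℓ k * sg ℓ j) (sg ℓ j * sg ℓ k)
  | sigma_sq (k : Fin (ℓ-1)) : Aff2Rel (sg ℓ k * sg ℓ k) 1
  | y_right_inv (m : Fin ℓ) : Aff2Rel (yg ℓ m * ygInv ℓ m) 1
  | y_left_inv (m : Fin ℓ) : Aff2Rel (ygInv ℓ m * yg ℓ m) 1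
  | x_right_inv (m : Fin ℓ) : Aff2Rel (xg ℓ m * xgInv ℓ m) 1
  | x_left_inv (m : Fin ℓ) : Aff2Rel (xgInv ℓ m * xg ℓ m) 1
  | y_comm (m p : Fin ℓ) : Aff2Rel (yg ℓ m * yg ℓ p) (yg ℓ p * yg ℓ m)
  | x_comm (m p : Fin ℓ) : Aff2Rel (xg ℓ m * xg ℓ p) (xg ℓ p * xg ℓ m)
  | y_sigma (m : Fin ℓ) (k : Fin (ℓ-1)) (h : (m : ℕ) ≠ (k : ℕ) ∧ (m : ℕ) ≠ (k : ℕ) + 1) :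
      Aff2Rel (yg ℓ m * sg ℓ k) (sg ℓ k * yg ℓ m)
  | x_sigma (m : Fin ℓ) (k : Fin (ℓ-1)) (h : (m : ℕ) ≠ (k : ℕ) ∧ (m : ℕ) ≠ (k : ℕ) + 1) :
      Aff2Rel (xg ℓ m * sg ℓ k) (sg ℓ k * xg ℓ m)
  | sigma_y_sigma (k : Fin (ℓ-1)) :
      Aff2Rel (sg ℓ k * yg ℓ (pos0 ℓ k) * sg ℓ k) (yg ℓ (pos1 ℓ k))
  | sigmaInv_x_sigmaInv (k : Fin (ℓ-1)) :
      Aff2Rel (sgInv ℓ k * xg ℓ (pos0 ℓ k) * sgInv ℓ k) (xg ℓ (pos1 ℓ k))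
  | yyx (h : 0 < ℓ) :
      Aff2Rel ((List.ofFn (fun p : Fin ℓ => yg ℓ p)).prod * xg ℓ ⟨0, h⟩)
        (xg ℓ ⟨0, h⟩ * (List.ofFn (fun p : Fin ℓ => yg ℓ p)).prod)
  | x1y2 (h : 1 < ℓ) :
      Aff2Rel (xg ℓ ⟨0, by omega⟩ * yg ℓ ⟨1, h⟩) (yg ℓ ⟨1, h⟩ * xg ℓ ⟨0, by omega⟩)

/-- The algebra `Aff²(S_ℓ)`, presented by generators and relations. -/
abbrev Aff2 := RingQuot (Aff2Rel ℓ)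

/-- The canonical projection onto `Aff²(S_ℓ)`. -/
def aff2mk : FreeAlgebra ℂ (Aff2Gen ℓ) →ₐ[ℂ] Aff2 ℓ := RingQuot.mkAlgHom ℂ (Aff2Rel ℓ)

theorem aff2mk_eq {a b : FreeAlgebra ℂ (Aff2Gen ℓ)} (h : Aff2Rel ℓ a b) :
    aff2mk ℓ a = aff2mk ℓ b :=
  RingQuot.mkAlgHom_rel ℂ h

theorem sigma_mul_self (k : Fin (ℓ-1)) : aff2mk ℓ (sg ℓ k) * aff2mk ℓ (sg ℓ k) = 1 := by
  simpa using aff2mk_eq ℓ (Aff2Rel.sigma_sq k)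

theorem sigmaInv_eq (k : Fin (ℓ-1)) : aff2mk ℓ (sgInv ℓ k) = aff2mk ℓ (sg ℓ k) :=
  left_inv_eq_right_inv (by simpa using aff2mk_eq ℓ (Aff2Rel.sigma_left_inv k))
    (sigma_mul_self ℓ k)

theorem commute_conj {M : Type*} [Monoid M] {s a b : M} (hs : s * s = 1) (h : Commute a b) :
    Commute (s * a * s) (s * b * s) := by
  have key (c d : M) : s * c * s * (s * d * s) = s * (c * d) * s := by
    calc s * c * s * (s * d * s) = s * c * (s * s) * d * s := by simp only [mul_assoc]
      _ = s * (c * d) * s := by rw [hs, mul_one]; simp only [mul_assoc]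
  change _ = _
  rw [key, key, h.eq]

theorem x_pos1 (k : Fin (ℓ-1)) : aff2mk ℓ (xg ℓ (pos1 ℓ k)) =
    aff2mk ℓ (sg ℓ k) * aff2mk ℓ (xg ℓ (pos0 ℓ k)) * aff2mk ℓ (sg ℓ k) := by
  have := aff2mk_eq ℓ (Aff2Rel.sigmaInv_x_sigmaInv k)
  rw [map_mul, map_mul, sigmaInv_eq] at this
  exact this.symm

theorem y_pos1 (k : Fin (ℓ-1)) : aff2mk ℓ (yg ℓ (pos1 ℓ k)) =
    aff2mk ℓ (sg ℓ k) * aff2mk ℓ (yg ℓ (pos0 ℓ k)) * aff2mk ℓ (sg ℓ k) := by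
  have := aff2mk_eq ℓ (Aff2Rel.sigma_y_sigma k)
  rw [map_mul, map_mul] at this
  exact this.symm

theorem y_pos0 (k : Fin (ℓ-1)) : aff2mk ℓ (yg ℓ (pos0 ℓ k)) =
    aff2mk ℓ (sg ℓ k) * aff2mk ℓ (yg ℓ (pos1 ℓ k)) * aff2mk ℓ (sg ℓ k) := by
  rw [y_pos1, ← mul_assoc, ← mul_assoc, sigma_mul_self, one_mul, mul_assoc, sigma_mul_self,
    mul_one]

theorem y_eq_conj (k : Fin (ℓ-1)) (m : Fin ℓ) (h : (m : ℕ) ≠ k ∧ (m : ℕ) ≠ (k : ℕ) + 1) :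
    aff2mk ℓ (yg ℓ m) = aff2mk ℓ (sg ℓ k) * aff2mk ℓ (yg ℓ m) * aff2mk ℓ (sg ℓ k) := by
  have := aff2mk_eq ℓ (Aff2Rel.y_sigma m k h)
  rw [map_mul, map_mul] at this
  rw [← this, mul_assoc, sigma_mul_self, mul_one]

/-- `x_1` commutes with `y_p` for `p ≥ 2`: `y_{p+1}` is obtained from `y_p` by conjugating with
`σ_p`, which commutes with `x_1` as soon as `p ≥ 2`. -/
theorem comm_x_zero_y_pos (n : ℕ) (h : n + 1 < ℓ) :
    Commute (aff2mk ℓ (xg ℓ ⟨0, by omega⟩)) (aff2mk ℓ (yg ℓ ⟨n + 1, h⟩)) := by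
  induction n with
  | zero =>
    have := aff2mk_eq ℓ (Aff2Rel.x1y2 h)
    rwa [map_mul, map_mul] at this
  | succ n ih =>
    have hx := aff2mk_eq ℓ (Aff2Rel.x_sigma ⟨0, by omega⟩ ⟨n + 1, by omega⟩ (by simp))
    rw [map_mul, map_mul] at hx
    have hx : Commute _ _ := hx
    have hy := y_pos1 ℓ ⟨n + 1, by omega⟩
    simp only [pos0, pos1] at hy
    rw [hy]
    exact (hx.mul_right (ih (by omega))).mul_right hx

theorem isUnit_y (m : Fin ℓ) : IsUnit (aff2mk ℓ (yg ℓ m)) :=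
  ⟨⟨_, aff2mk ℓ (ygInv ℓ m), by simpa using aff2mk_eq ℓ (Aff2Rel.y_right_inv m),
    by simpa using aff2mk_eq ℓ (Aff2Rel.y_left_inv m)⟩, rfl⟩

/-- `x_1` commutes with all `y_p`; the case `p = 1` comes from the relation with the full product
`y_1 ⋯ y_ℓ`, after cancelling the unit `y_2 ⋯ y_ℓ`. -/
theorem comm_x_zero_y (h : 0 < ℓ) (p : Fin ℓ) :
    Commute (aff2mk ℓ (xg ℓ ⟨0, h⟩)) (aff2mk ℓ (yg ℓ p)) := by
  obtain ⟨_ | n, hp⟩ := p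
  · obtain ⟨n, rfl⟩ : ∃ n, ℓ = n + 1 := ⟨ℓ - 1, by omega⟩
    have hr := aff2mk_eq (n + 1) (Aff2Rel.yyx h)
    simp only [map_mul, map_list_prod, List.map_ofFn, List.ofFn_succ, List.prod_cons]
      at hr
    -- `Q` is the product of all `y`'s except the first.
    set Q := (List.ofFn fun i : Fin n => aff2mk (n + 1) (yg (n + 1) i.succ)).prod
    have hc : Commute (aff2mk (n + 1) (xg (n + 1) ⟨0, h⟩)) Q := by
      apply Commute.list_prod_right
      intro z hz
      obtain ⟨i, rfl⟩ := (List.mem_ofFn' _ _).1 hz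
      exact comm_x_zero_y_pos (n + 1) i (by omega)
    have hu : IsUnit Q := by
      apply List.prod_isUnit
      intro z hz
      obtain ⟨i, rfl⟩ := (List.mem_ofFn' _ _).1 hz
      exact isUnit_y _ _
    apply hu.mul_right_cancel
    rw [mul_assoc, mul_assoc, hc.eq, ← mul_assoc _ Q]
    exact hr.symm
  · exact comm_x_zero_y_pos ℓ n hp

theorem comm_x_y (n : ℕ) (h : n < ℓ) (p : Fin ℓ) :
    Commute (aff2mk ℓ (xg ℓ ⟨n, h⟩)) (aff2mk ℓ (yg ℓ p)) := by
  induction n generalizing p with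
  | zero => exact comm_x_zero_y ℓ h p
  | succ n ih =>
    have hx := x_pos1 ℓ ⟨n, by omega⟩
    have hs := sigma_mul_self ℓ ⟨n, by omega⟩
    change aff2mk ℓ (xg ℓ ⟨n + 1, h⟩) = _ at hx
    rw [hx]
    by_cases h0 : (p : ℕ) = n
    · rw [show p = pos0 ℓ ⟨n, by omega⟩ from Fin.ext h0, y_pos0]
      exact commute_conj hs (ih _ _)
    by_cases h1 : (p : ℕ) = n + 1
    · rw [show p = pos1 ℓ ⟨n, by omega⟩ from Fin.ext h1, y_pos1]
      exact commute_conj hs (ih _ _)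
    · rw [y_eq_conj ℓ ⟨n, by omega⟩ p ⟨h0, h1⟩]
      exact commute_conj hs (ih _ _)

/-- In `Aff²(S_ℓ)`, the generators `x_m` and `y_p` commute for all `m, p ∈ [1,ℓ]`. -/
theorem aff2_x_y_comm (m p : Fin ℓ) :
    aff2mk ℓ (xg ℓ m) * aff2mk ℓ (yg ℓ p) = aff2mk ℓ (yg ℓ p) * aff2mk ℓ (xg ℓ m) := by
  exact comm_x_y ℓ m m.isLt p

end
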